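/- (Soundness of the While Consequence rule) Let P, P', Q, γ be programs, B a predicate on states, and C the relation of the loop body. Assume pst(P') = pst(P) ∩ {s | B s}, pst(Q) = pst(P) ∩ {s | ¬ B s}, and the operational triple ⟨P'⟩ C ⟨γ;P⟩ holds. Then the operational triple ⟨P⟩ while B do C ⟨Q⟩ holds, where the relation of the while loop is ⋃ over n of ((test B ; C) iterated n times) ; test(¬B). -/

import Mathlib

def pst {σ : Type*} (R : σ → σ → Prop) : Set σ := {t | ∃ s, R s t}

def seqc {σ : Type*} (R S : σ → σ → Prop) : σ → σ → Prop :=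
  fun s t => ∃ u, R s u ∧ S u t

def triple {σ : Type*} (P C Q : σ → σ → Prop) : Prop :=
  pst (seqc P C) ⊆ pst Q

def test {σ : Type*} (B : σ → Prop) : σ → σ → Prop :=
  fun s t => s = t ∧ B s

def iter {σ : Type*} (R : σ → σ → Prop) : ℕ → (σ → σ → Prop)
  | 0 => fun s t => s = t
  | (n + 1) => seqc R (iter R n)

def whileRel {σ : Type*} (B : σ → Prop) (C : σ → σ → Prop) : σ → σ → Prop :=
  fun s t => ∃ n : ℕ, seqc (iter (seqc (test B) C) n) (test (fun s => ¬ B s)) s t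

theorem iter_mem_of_invariant {σ : Type*} {R : σ → σ → Prop} {I : Set σ}
    (hI : ∀ s t, s ∈ I → R s t → t ∈ I) (n : ℕ) {s t : σ} (hs : s ∈ I)
    (hst : iter R n s t) : t ∈ I := by
  induction n generalizing s with
  | zero => exact (show s = t from hst) ▸ hs
  | succ n ih =>
    obtain ⟨u, hsu, hut⟩ := hst
    exact ih (hI s u hs hsu) hut

theorem while_consequence_sound {σ : Type*} (P P' Q γ : σ → σ → Prop) (B : σ → Prop)
    (C : σ → σ → Prop)
    (hP' : pst P' = pst P ∩ {s | B s})
    (hQ : pst Q = pst P ∩ {s | ¬ B s})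
    (h : triple P' C (seqc γ P)) :
    triple P (whileRel B C) Q := by
  have invariant : ∀ s t, s ∈ pst P → seqc (test B) C s t → t ∈ pst P := by
    rintro s t hs ⟨u, ⟨rfl, hB⟩, hC⟩
    have hs' : s ∈ pst P' := by
      rw [hP']
      exact ⟨hs, hB⟩
    obtain ⟨r, hr⟩ := hs'
    obtain ⟨_, v, _, hv⟩ := h ⟨r, s, hr, hC⟩
    exact ⟨v, hv⟩
  rintro t ⟨r, s, hrs, n, u, hsu, rfl, hB⟩
  rw [hQ]
  exact ⟨iter_mem_of_invariant invariant n ⟨r, hrs⟩ hsu, hB⟩
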